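/- Fix L₉, the lattice with basis H, E₁, …, E₉ and K = −3H + E₁ + ⋯ + E₉, together with reduced area data h, e₁, …, e₉. Let F₁, …, F₈ be classes in L₉ such that: (i) each F_k has the form a_kH − (a_k − 1)E_{j₁} − E_{j₂} − ⋯ − E_{j_{2a_k+2}} for some integer 0 ≤ a_k ≤ 3 and distinct indices j₁, …, j_{2a_k+2} (so F_k·F_k = −2 and K·F_k = 0); (ii) F_j·F_k = 0 for all j ≠ k; (iii) there are real numbers δ₁, δ₂ with δ₂ < δ₁ < 2δ₂, 7δ₁ < 3h − Σᵢ eᵢ and 7δ₂ < 3h − Σᵢ eᵢ, such that exactly one F_k has area ω(F_k) = δ₁ and the remaining seven have area ω(F_k) = δ₂. Then, up to reordering F₁, …, F₈, one of the following holds: (a) there are distinct indices i₁, …, i₈ ∈ {1,…,9} with F₁ = 3H − 2E_{i₁} − E_{i₂} − ⋯ − E_{i₈}, F₂ = H − E_{i₂} − E_{i₃} − E_{i₄}, F₃ = H − E_{i₂} − E_{i₅} − E_{i₆}, F₄ = H − E_{i₂} − E_{i₇} − E_{i₈}, F₅ = H − E_{i₃} − E_{i₅} − E_{i₇}, F₆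 = H − E_{i₃} − E_{i₆} − E_{i₈}, F₇ = H − E_{i₄} − E_{i₅} − E_{i₈}, F₈ = H − E_{i₄} − E_{i₆} − E_{i₇}; (b) there are distinct indices l₁, …, l₉ ∈ {1,…,9} with F₁ = H − E_{l₁} − E_{l₂} − E_{l₃}, F₂ = H − E_{l₁} − E_{l₄} − E_{l₅}, F₃ = H − E_{l₁} − E_{l₆} − E_{l₇}, F₄ = H − E_{l₂} − E_{l₄} − E_{l₆}, F₅ = H − E_{l₃} − E_{l₅} − E_{l₆}, F₆ = H − E_{l₂} − E_{l₅} − E_{l₇}, F₇ = H − E_{l₃} − E_{l₄} − E_{l₇}, F₈ = E_{l₈} − E_{l₉}; or (c) there are distinct indices l₁, …, l₉ ∈ {1,…,9} with F₁ = H − E_{l₁} − E_{l₂} − E_{l₃}, F₂ = H − E_{l₁} − E_{l₄} − E_{l₅}, F₃ = H − E_{l₁} − E_{l₆} − E_{l₇}, F₄ = H − E_{l₁} − E_{l₈} − E_{l₉}, F₅ = E_{l₂} − E_{l₃}, F₆ = E_{l₄} − E_{l₅}, F₇ = E_{l₆} − E_{l₇}, F₈ = E_{l₈} − E_{l₉}.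 (This is Lemma 5.1 of the paper at the homological level: the classification of the classes of eight disjoint symplectic (−2)-spheres in CP² # 9CP²‾ under the stated area constraints; hypothesis (i) is the form guaranteed by Lemma 3.6 under the area condition ω(F_k) < −ω(K).) -/

import Mathlib

/-!
Classes of the lattice `L₉ = ℤ⟨H, E₁, …, E₉⟩` are encoded as pairs `(a, v)`
representing `aH + Σᵢ vᵢEᵢ`; the intersection form is
`(a, v)·(a', v') = a·a' − Σᵢ vᵢv'ᵢ`, and given reduced area data `h, e`,
the area of `(a, v)` is `a·h + Σᵢ vᵢeᵢ` (so `aH − Σᵢ bᵢEᵢ` has area `a·h − Σᵢ bᵢeᵢ`).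
-/

/-- Intersection number in `L₉`. -/
def interL9 (A B : ℤ × (Fin 9 → ℤ)) : ℤ :=
  A.1 * B.1 - ∑ i, A.2 i * B.2 i

/-- Area of a class, given reduced area data `(h, e)`. -/
noncomputable def areaL9 (h : ℝ) (e : Fin 9 → ℝ) (A : ℤ × (Fin 9 → ℤ)) : ℝ :=
  (A.1 : ℝ) * h + ∑ i, (A.2 i : ℝ) * e i

/-- The class `H − Eᵢ − Eⱼ − E_k`. -/
def lineL9 (i j k : Fin 9) : ℤ × (Fin 9 → ℤ) :=
  (1, fun x => if x = i ∨ x = j ∨ x = k then -1 else 0)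

/-- The class `Eᵢ − Eⱼ`. -/
def diffL9 (i j : Fin 9) : ℤ × (Fin 9 → ℤ) :=
  (0, fun x => if x = i then 1 else if x = j then -1 else 0)

/-- The class `3H − 2E_{i₁} − E_{i₂} − ⋯ − E_{i₈}` for `i : Fin 8 → Fin 9` injective. -/
def cubicL9 (i : Fin 8 → Fin 9) : ℤ × (Fin 9 → ℤ) :=
  (3, fun x => if x = i 0 then -2 else if x ∈ Finset.univ.image i then -1 else 0)

/-!
The reflection `F ↦ -K - F` exchanges the coefficients `a` and `3 - a` in the form of the classes,
and preserves orthogonality since `K` is isotropic and orthogonal to all of them. So up to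
reflection there are eight pairwise orthogonal classes `H - Eᵢ - Eⱼ - E_k` and `Eᵢ - Eⱼ`: triples
meeting pairwise in one point, and disjoint pairs, each of which lies in or is disjoint from any
given triple. Either some point lies on more than three triples, hence on all of them, and there
are four triples and four pairs; or the triples form a Fano plane and there is one pair.

Where a class was reflected, its partner has area at least `-ω(K) - δ₁`. The inequalities
`eᵢ + eⱼ + e_k ≤ h` leave no room for this in the pencil, nor for an odd number, or all, of the
four lines of the Fano plane missing a point. The only other nonempty set of reflected lines
consists of the three lines through a point; there the same inequalities force an equality between
areas that `δ₂ < δ₁` violates. Reflecting the pair of the Fano case gives the cubic class.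
-/

theorem exists_eq_triple {α : Type*} [DecidableEq α] {s : Finset α} {x y : α} (hs : s.card = 3)
    (hx : x ∈ s) (hy : y ∈ s) (hxy : x ≠ y) : ∃ z, z ≠ x ∧ z ≠ y ∧ s = {x, y, z} := by
  have hcard : ((s.erase x).erase y).card = 1 := by
    rw [Finset.card_erase_of_mem (Finset.mem_erase.2 ⟨hxy.symm, hy⟩),
      Finset.card_erase_of_mem hx, hs]
  obtain ⟨z, hz⟩ := Finset.card_eq_one.1 hcard
  have hmem : z ∈ (s.erase x).erase y := hz ▸ Finset.mem_singleton_self z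
  grind

/-- The incidence conditions for triples `T i` and disjoint pairs `{p k, q k}` which express that
the classes `H - ∑_{x ∈ T i} Eₓ` and `E_{p k} - E_{q k}` are pairwise orthogonal. -/
structure OrthogonalSystem {α ι κ : Type*} [DecidableEq α] (T : ι → Finset α) (p q : κ → α) :
    Prop where
  card_triple : ∀ i, (T i).card = 3
  card_inter : ∀ i j, i ≠ j → (T i ∩ T j).card = 1
  injective : Function.Injective (Sum.elim p q)
  mem_iff : ∀ k i, p k ∈ T i ↔ q k ∈ T i

/-- The lines of the Fano plane on `ℤ/7`, in the cyclic model: the translates of `{1, 2, 4}`. -/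
def fanoLine (m : Fin 7) : Finset (Fin 7) := {m + 1, m + 2, m + 4}

namespace OrthogonalSystem

variable {α ι κ : Type*} [DecidableEq α] {T : ι → Finset α} {p q : κ → α}

theorem eq_of_mem (hS : OrthogonalSystem T p q) {i j : ι} {x y : α} (hxy : x ≠ y)
    (hxi : x ∈ T i) (hyi : y ∈ T i) (hxj : x ∈ T j) (hyj : y ∈ T j) : i = j := by
  by_contra hij
  exact hxy (Finset.card_le_one.1 (hS.card_inter i j hij).le x (by simp [*]) y (by simp [*]))

theorem exists_mem_mem (hS : OrthogonalSystem T p q) (i j : ι) : ∃ x ∈ T i, x ∈ T j := by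
  have hpos : 0 < (T i ∩ T j).card := by
    rcases eq_or_ne i j with rfl | hij
    · simp [hS.card_triple]
    · simp [hS.card_inter i j hij]
  obtain ⟨x, hx⟩ := Finset.card_pos.1 hpos
  exact ⟨x, Finset.mem_inter.1 hx⟩

theorem two_mul_card_le [Fintype α] [Fintype κ] (hS : OrthogonalSystem T p q) :
    2 * Fintype.card κ ≤ Fintype.card α := by
  simpa [two_mul] using Fintype.card_le_of_injective _ hS.injective

theorem fst_ne_snd (hS : OrthogonalSystem T p q) (k : κ) : p k ≠ q k :=
  hS.injective.ne (a₁ := .inl k) (a₂ := .inr k) (by simp)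

theorem injective_optionElim (hS : OrthogonalSystem T p q) [Nontrivial ι] {o : α}
    (ho : ∀ i, o ∈ T i) : Function.Injective fun z : Option (κ ⊕ κ) => z.elim o (Sum.elim p q) := by
  obtain ⟨i, j, hij⟩ := exists_pair_ne ι
  have hp (k : κ) : o ≠ p k := by
    rintro rfl
    exact hij (hS.eq_of_mem (hS.fst_ne_snd k) (ho i) ((hS.mem_iff k i).1 (ho i)) (ho j)
      ((hS.mem_iff k j).1 (ho j)))
  have hq (k : κ) : o ≠ q k := by
    rintro rfl
    exact hij (hS.eq_of_mem (hS.fst_ne_snd k) ((hS.mem_iff k i).2 (ho i)) (ho i)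
      ((hS.mem_iff k j).2 (ho j)) (ho j))
  rintro (_ | x) (_ | y) hxy
  · rfl
  · rcases y with k | k
    exacts [absurd hxy (hp k), absurd hxy (hq k)]
  · rcases x with k | k
    exacts [absurd hxy.symm (hp k), absurd hxy.symm (hq k)]
  · exact congrArg some (hS.injective hxy)

theorem exists_eq_insert (hS : OrthogonalSystem T p q) {o : α} (ho : ∀ i, o ∈ T i)
    (hbij : Function.Bijective fun z : Option (κ ⊕ κ) => z.elim o (Sum.elim p q)) (i : ι) :
    ∃ k, T i = {o, p k, q k} := by
  obtain ⟨x, hx, hxo⟩ := Finset.exists_mem_ne (s := T i) (by simp [hS.card_triple]) o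
  obtain ⟨_ | k | k, rfl⟩ := hbij.2 x
  · exact absurd rfl hxo
  all_goals
    refine ⟨k, (Finset.eq_of_subset_of_card_le ?_ ?_).symm⟩
    · have := hS.mem_iff k i
      simp_all [Finset.insert_subset_iff]
    · rw [hS.card_triple, Finset.card_eq_three.2 ⟨o, p k, q k, ?_, ?_, hS.fst_ne_snd k, rfl⟩]
      · exact hbij.1.ne (a₁ := none) (a₂ := some (.inl k)) (by simp)
      · exact hbij.1.ne (a₁ := none) (a₂ := some (.inr k)) (by simp)

theorem ne_of_eq_insert (hS : OrthogonalSystem T p q) {o x y x' y' : α} {i j : ι}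
    (hi : T i = {o, x, y}) (hj : T j = {o, x', y'}) (hyo : y ≠ o) (hx'o : x' ≠ o) (hx'x : x' ≠ x)
    (hx'y : x' ≠ y) : y ≠ y' := by
  rintro rfl
  have hij := hS.eq_of_mem (i := i) (j := j) hyo (by simp [hi]) (by simp [hi]) (by simp [hj])
    (by simp [hj])
  have hx' : x' ∈ T i := by rw [hij, hj]; simp
  simp [hi, hx'o, hx'x, hx'y] at hx'

theorem eq_image_fanoLine (hS : OrthogonalSystem T p q) {l : Fin 7 → α}
    (hl : Function.Injective l) {i₀ : ι} (h₀ : T i₀ = (fanoLine 0).image l)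
    (hneg : ∀ u ∈ fanoLine 0, ∃ i, T i = (fanoLine (-u)).image l) {u : Fin 7}
    (hu : u ∈ fanoLine 0) {j : ι} (h2 : l (2 * u) ∈ T j) (h3 : l (3 * u) ∈ T j) :
    T j = (fanoLine u).image l := by
  have hmul : ∀ u ∈ fanoLine 0, 2 * u ∈ fanoLine 0 ∧ 4 * u ∈ fanoLine 0 := by decide
  have h5 : l (5 * u) ∈ T j := by
    obtain ⟨i₂, hi₂⟩ := hneg _ (hmul u hu).1
    obtain ⟨i₄, hi₄⟩ := hneg _ (hmul u hu).2
    have hnotMem (i : ι) (m : Fin 7) (hi : T i = (fanoLine m).image l)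
        (hm : 3 * u ∉ fanoLine m) : j ≠ i := by
      rintro rfl
      rw [hi, hl.mem_finset_image] at h3
      exact hm h3
    obtain ⟨x, hxj, hx⟩ := hS.exists_mem_mem j i₄
    rw [hi₄, Finset.mem_image] at hx
    obtain ⟨y, hy, rfl⟩ := hx
    have hy' : ∀ u ∈ fanoLine 0, ∀ y ∈ fanoLine (-(4 * u)), y = 0 ∨ y = 4 * u ∨ y = 5 * u := by
      decide
    have hne : ∀ u ∈ fanoLine 0, 2 * u ≠ 0 ∧ 2 * u ≠ 4 * u ∧ 3 * u ∉ fanoLine (-(2 * u)) ∧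
      3 * u ∉ fanoLine 0 ∧ 2 * u ∈ fanoLine (-(2 * u)) ∧ 0 ∈ fanoLine (-(2 * u)) := by decide
    obtain ⟨h20, h24, h3₂, h3₀, h2₂, h0₂⟩ := hne u hu
    rcases hy' u hu y hy with rfl | rfl | rfl
    · refine absurd (hS.eq_of_mem (hl.ne h20) h2 hxj ?_ ?_) (hnotMem i₂ _ hi₂ h3₂) <;>
        simp [hl.mem_finset_image, hi₂, h2₂, h0₂]
    · refine absurd (hS.eq_of_mem (hl.ne h24) h2 hxj ?_ ?_) (hnotMem i₀ _ h₀ h3₀) <;>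
        simp [h₀, hl.mem_finset_image, hmul u hu]
    · exact hxj
  have hline : ∀ u ∈ fanoLine 0, fanoLine u = {2 * u, 3 * u, 5 * u} ∧ (fanoLine u).card = 3 := by
    decide
  refine (Finset.eq_of_subset_of_card_le ?_ ?_).symm
  · simp [(hline u hu).1, Finset.insert_subset_iff, *]
  · rw [hS.card_triple, Finset.card_image_of_injective _ hl, (hline u hu).2]

variable [Fintype ι]

theorem sum_degree (hS : OrthogonalSystem T p q) (i : ι) :
    ∑ x ∈ T i, (Finset.univ.filter fun j => x ∈ T j).card = Fintype.card ι + 2 := by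
  classical
  calc ∑ x ∈ T i, (Finset.univ.filter fun j => x ∈ T j).card
      = ∑ j, (T i ∩ T j).card := by
        simp only [← Finset.filter_mem_eq_inter]
        exact Finset.sum_card_bipartiteAbove_eq_sum_card_bipartiteBelow fun x j => x ∈ T j
    _ = ∑ j, (1 + if j = i then 2 else 0) := by
        refine Finset.sum_congr rfl fun j _ => ?_
        split_ifs with hj
        · simp [hj, hS.card_triple]
        · exact hS.card_inter i j (Ne.symm hj)
    _ = Fintype.card ι + 2 := by simp [Finset.sum_add_distrib]

theorem degree_le_of_notMem (hS : OrthogonalSystem T p q) {o : α} {i : ι} (ho : o ∉ T i) :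
    (Finset.univ.filter fun j => o ∈ T j).card ≤ 3 := by
  choose f hfi hfj using hS.exists_mem_mem i
  rw [← hS.card_triple i]
  refine Finset.card_le_card_of_injOn f (fun j _ => hfi j) fun j hj k hk hjk => ?_
  have hne : o ≠ f j := fun h => ho (h ▸ hfi j)
  exact hS.eq_of_mem hne (by simpa using hj) (hfj j) (by simpa using hk) (hjk ▸ hfj k)

theorem two_mul_card_lt_of_forall_mem [Fintype α] (hS : OrthogonalSystem T p q) {o : α}
    (ho : ∀ i, o ∈ T i) : 2 * Fintype.card ι < Fintype.card α := by
  have hdisj : (Set.univ : Set ι).PairwiseDisjoint fun i => (T i).erase o := by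
    intro i _ j _ hij
    refine Finset.disjoint_left.2 fun x hxi hxj => hij ?_
    rw [Finset.mem_erase] at hxi hxj
    exact hS.eq_of_mem hxi.1 hxi.2 (ho i) hxj.2 (ho j)
  calc 2 * Fintype.card ι = (Finset.univ.biUnion fun i => (T i).erase o).card := by
        rw [Finset.card_biUnion (fun i _ j _ => hdisj trivial trivial)]
        simp [ho, hS.card_triple, mul_comm]
    _ < Fintype.card α := by
        refine Finset.card_lt_univ_of_notMem (x := o) ?_
        simp

theorem card_biUnion_powersetCard (hS : OrthogonalSystem T p q) :
    (Finset.univ.biUnion fun i => (T i).powersetCard 2).card = 3 * Fintype.card ι := by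
  rw [Finset.card_biUnion]
  · simp [hS.card_triple, mul_comm]
  · intro i _ j _ hij
    refine Finset.disjoint_left.2 fun s hsi hsj => hij ?_
    rw [Finset.mem_powersetCard] at hsi hsj
    obtain ⟨x, y, hxy, rfl⟩ := Finset.card_eq_two.1 hsi.2
    exact hS.eq_of_mem hxy (hsi.1 (by simp)) (hsi.1 (by simp)) (hsj.1 (by simp)) (hsj.1 (by simp))

theorem biUnion_powersetCard_subset {X : Finset α} (hX : ∀ i, T i ⊆ X) :
    (Finset.univ.biUnion fun i => (T i).powersetCard 2) ⊆ X.powersetCard 2 :=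
  Finset.biUnion_subset.2 fun i _ => Finset.powersetCard_mono (hX i)

theorem three_mul_card_le_choose (hS : OrthogonalSystem T p q) {X : Finset α}
    (hX : ∀ i, T i ⊆ X) : 3 * Fintype.card ι ≤ X.card.choose 2 := by
  rw [← hS.card_biUnion_powersetCard, ← Finset.card_powersetCard]
  exact Finset.card_le_card (biUnion_powersetCard_subset hX)

theorem exists_mem_and_mem (hS : OrthogonalSystem T p q) {X : Finset α} (hX : ∀ i, T i ⊆ X)
    (hcard : X.card.choose 2 = 3 * Fintype.card ι) {x y : α} (hx : x ∈ X) (hy : y ∈ X)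
    (hxy : x ≠ y) : ∃ i, x ∈ T i ∧ y ∈ T i := by
  have heq := Finset.eq_of_subset_of_card_le (biUnion_powersetCard_subset hX)
    (by rw [Finset.card_powersetCard, hS.card_biUnion_powersetCard, hcard])
  have hmem : {x, y} ∈ X.powersetCard 2 := by
    simp [Finset.mem_powersetCard, Finset.insert_subset_iff, hx, hy, hxy]
  rw [← heq] at hmem
  simpa [Finset.insert_subset_iff, hxy] using hmem

theorem forall_mem_of_three_lt_degree (hS : OrthogonalSystem T p q) {o : α}
    (ho : 3 < (Finset.univ.filter fun j => o ∈ T j).card) (i : ι) : o ∈ T i := by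
  by_contra hi
  exact ho.not_ge (hS.degree_le_of_notMem hi)

theorem exists_equiv_pencil [Fintype α] [Fintype κ] (hS : OrthogonalSystem T p q)
    (hα : Fintype.card α = 9) (hcard : Fintype.card ι + Fintype.card κ = 8)
    {o : α} (ho : ∀ i, o ∈ T i) :
    ∃ (l : Option (Fin 4 ⊕ Fin 4) → α) (σ : Fin 4 ≃ ι) (τ : Fin 4 ≃ κ), Function.Injective l ∧
      ∀ j, T (σ j) = {l none, l (some (.inl j)), l (some (.inr j))} ∧
        p (τ j) = l (some (.inl j)) ∧ q (τ j) = l (some (.inr j)) := by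
  have hι := hS.two_mul_card_lt_of_forall_mem ho
  have hκ := hS.two_mul_card_le
  have : Nontrivial ι := Fintype.one_lt_card_iff_nontrivial.1 (by lia)
  have hinj := hS.injective_optionElim ho
  have hbij := (Fintype.bijective_iff_injective_and_card _).2
    ⟨hinj, by simp only [Fintype.card_option, Fintype.card_sum]; lia⟩
  choose f hf using hS.exists_eq_insert ho hbij
  have hfinj : Function.Injective f := fun i j hij => by
    by_contra hne
    have := hS.card_inter i j hne
    rw [hf i, hf j, hij, Finset.inter_self, ← hij, ← hf i, hS.card_triple] at this
    lia
  let φ : ι ≃ κ := Equiv.ofBijective f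
    ((Fintype.bijective_iff_injective_and_card f).2 ⟨hfinj, by lia⟩)
  let τ : Fin 4 ≃ κ := Fintype.equivOfCardEq (by simp; lia)
  refine ⟨fun z => (z.map (Sum.map τ τ)).elim o (Sum.elim p q), τ.trans φ.symm, τ,
    hinj.comp (Option.map_injective (Sum.map_injective.2 ⟨τ.injective, τ.injective⟩)),
    fun j => ⟨?_, rfl, rfl⟩⟩
  rw [hf]
  simp [show f (φ.symm (τ j)) = τ j from φ.apply_symm_apply (τ j)]

theorem notMem_of_forall_degree_le (hS : OrthogonalSystem T p q) (hι : 4 ≤ Fintype.card ι)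
    (hdeg : ∀ x, (Finset.univ.filter fun j => x ∈ T j).card ≤ 3) (k : κ) (i : ι) : p k ∉ T i := by
  intro hp
  have hq := (hS.mem_iff k i).1 hp
  have hpq := hS.fst_ne_snd k
  have hone (x : α) (hx : x = p k ∨ x = q k) :
      (Finset.univ.filter fun j => x ∈ T j).card ≤ 1 := by
    refine Finset.card_le_one.2 fun j hj j' hj' => ?_
    have := hS.mem_iff k j
    have := hS.mem_iff k j'
    simp only [Finset.mem_filter, Finset.mem_univ, true_and] at hj hj'
    apply hS.eq_of_mem hpq <;> rcases hx with rfl | rfl <;> tauto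
  obtain ⟨z, hzp, hzq, hT⟩ := exists_eq_triple (hS.card_triple i) hp hq hpq
  have hsum := hS.sum_degree i
  rw [hT, Finset.sum_insert (by simp [hpq, hzp.symm]), Finset.sum_insert (by simp [hzq.symm]),
    Finset.sum_singleton] at hsum
  have := hone _ (.inl rfl)
  have := hone _ (.inr rfl)
  have := hdeg z
  lia

theorem exists_card_eq_seven [Fintype α] [Fintype κ] (hS : OrthogonalSystem T p q)
    (hα : Fintype.card α = 9) (hcard : Fintype.card ι + Fintype.card κ = 8)
    (hdeg : ∀ x, (Finset.univ.filter fun j => x ∈ T j).card ≤ 3) :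
    Fintype.card ι = 7 ∧ ∃ X : Finset α, X.card = 7 ∧ (∀ i, T i ⊆ X) ∧
      ∀ k, p k ∉ X ∧ q k ∉ X := by
  have hκ := hS.two_mul_card_le
  let X : Finset α := (Finset.univ.image (Sum.elim p q))ᶜ
  have hX (i : ι) : T i ⊆ X := by
    intro x hx
    simp only [X, Finset.mem_compl, Finset.mem_image, Finset.mem_univ, true_and]
    have hp (k : κ) := hS.notMem_of_forall_degree_le (by lia) hdeg k i
    rintro ⟨k | k, rfl⟩
    exacts [hp k hx, hp k ((hS.mem_iff k i).2 hx)]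
  have hXcard : X.card = 9 - 2 * Fintype.card κ := by
    rw [Finset.card_compl, Finset.card_image_of_injective _ hS.injective, hα, Finset.card_univ,
      Fintype.card_sum, two_mul]
  have hι : Fintype.card ι ≤ 7 := by
    obtain ⟨i⟩ : Nonempty ι := Fintype.card_pos_iff.1 (by lia)
    have := Finset.sum_le_card_nsmul _ _ _ fun x (_ : x ∈ T i) => hdeg x
    rw [hS.sum_degree, hS.card_triple] at this
    simpa using this
  have hchoose := hS.three_mul_card_le_choose hX
  have hκ1 : Fintype.card κ = 1 := by
    rw [hXcard, show Fintype.card ι = 8 - Fintype.card κ by lia] at hchoose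
    have : Fintype.card κ ≤ 4 := by lia
    have : 1 ≤ Fintype.card κ := by lia
    interval_cases Fintype.card κ <;> simp_all [Nat.choose]
  refine ⟨by lia, X, by lia, hX, fun k => ⟨?_, ?_⟩⟩
  · exact fun h => Finset.mem_compl.1 h (Finset.mem_image.2 ⟨.inl k, by simp⟩)
  · exact fun h => Finset.mem_compl.1 h (Finset.mem_image.2 ⟨.inr k, by simp⟩)

theorem exists_eq_triple_of_mem (hS : OrthogonalSystem T p q) {X : Finset α} (hX : ∀ i, T i ⊆ X)
    (hcard : X.card.choose 2 = 3 * Fintype.card ι) {x y : α} (hx : x ∈ X) (hy : y ∈ X)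
    (hxy : x ≠ y) : ∃ i z, z ≠ x ∧ z ≠ y ∧ T i = {x, y, z} := by
  obtain ⟨i, hxi, hyi⟩ := hS.exists_mem_and_mem hX hcard hx hy hxy
  obtain ⟨z, hz⟩ := exists_eq_triple (hS.card_triple i) hxi hyi hxy
  exact ⟨i, z, hz⟩

theorem exists_fano_labelling (hS : OrthogonalSystem T p q) {X : Finset α} (hX : ∀ i, T i ⊆ X)
    (hι : Fintype.card ι = 7) (hXcard : X.card = 7) :
    ∃ l : Fin 7 → α, Function.Injective l ∧ (∀ x, l x ∈ X) ∧
      (∃ i, T i = (fanoLine 0).image l) ∧ ∀ u ∈ fanoLine 0, ∃ i, T i = (fanoLine (-u)).image l := by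
  have hchoose : X.card.choose 2 = 3 * Fintype.card ι := by simp [hι, hXcard, Nat.choose]
  obtain ⟨i₀⟩ : Nonempty ι := Fintype.card_pos_iff.1 (by lia)
  obtain ⟨a, b, c, hab, hac, hbc, h₀⟩ := Finset.card_eq_three.1 (hS.card_triple i₀)
  obtain ⟨o, hoX, ho⟩ := Finset.exists_mem_notMem_of_card_lt_card
    (show (T i₀).card < X.card by simp [hS.card_triple, hXcard])
  have hthird (x : α) (hx : x ∈ T i₀) : ∃ i y, y ∉ T i₀ ∧ y ≠ o ∧ T i = {o, x, y} := by
    obtain ⟨i, y, hyo, hyx, hi⟩ := hS.exists_eq_triple_of_mem hX hchoose hoX (hX i₀ hx)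
      fun h => ho (h ▸ hx)
    refine ⟨i, y, fun hy => ho ?_, hyo, hi⟩
    rw [hS.eq_of_mem (i := i₀) (j := i) hyx hy hx (by simp [hi]) (by simp [hi])]
    simp [hi]
  obtain ⟨i₁, a', ha', hao, h₁⟩ := hthird a (by simp [h₀])
  obtain ⟨i₂, b', hb', hbo, h₂⟩ := hthird b (by simp [h₀])
  obtain ⟨i₃, c', hc', hco, h₃⟩ := hthird c (by simp [h₀])
  simp only [h₀, Finset.mem_insert, Finset.mem_singleton, not_or] at ho ha' hb' hc'
  have hab' := hS.ne_of_eq_insert h₁ h₂ hao (Ne.symm ho.2.1) hab.symm (Ne.symm ha'.2.1)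
  have hac' := hS.ne_of_eq_insert h₁ h₃ hao (Ne.symm ho.2.2) hac.symm (Ne.symm ha'.2.2)
  have hbc' := hS.ne_of_eq_insert h₂ h₃ hbo (Ne.symm ho.2.2) hbc.symm (Ne.symm hb'.2.2)
  refine ⟨![o, a, b, a', c, c', b'], ?_, ?_, ⟨i₀, ?_⟩, ?_⟩
  · rw [← List.nodup_ofFn]
    simp only [List.ofFn_succ, List.ofFn_zero, Matrix.cons_val_zero, Matrix.cons_val_succ,
      List.nodup_cons, List.mem_cons, not_or]
    grind
  · have := hX i₀
    have := hX i₁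
    have := hX i₂
    have := hX i₃
    simp_all [Fin.forall_fin_succ, Finset.insert_subset_iff]
  · rw [h₀, show fanoLine 0 = {1, 2, 4} by decide]
    simp
  · have hline : ∀ u ∈ fanoLine 0, fanoLine (-u) = {0, 1, 3} ∨ fanoLine (-u) = {0, 2, 6} ∨
        fanoLine (-u) = {0, 4, 5} := by decide
    intro u hu
    rcases hline u hu with h | h | h <;> rw [h]
    exacts [⟨i₁, by simp [h₁]⟩, ⟨i₂, by simp [h₂]⟩, ⟨i₃, by simp [h₃]⟩]

theorem exists_equiv_fano [Fintype α] [Fintype κ] (hS : OrthogonalSystem T p q)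
    (hα : Fintype.card α = 9) (hcard : Fintype.card ι + Fintype.card κ = 8)
    (hdeg : ∀ x, (Finset.univ.filter fun j => x ∈ T j).card ≤ 3) :
    ∃ (l : Fin 7 ⊕ Fin 2 → α) (σ : Fin 7 ≃ ι) (τ : Unit ≃ κ), Function.Injective l ∧
      (∀ m, T (σ m) = (fanoLine m).image (l ∘ .inl)) ∧
      p (τ ()) = l (.inr 0) ∧ q (τ ()) = l (.inr 1) := by
  obtain ⟨hι, X, hXcard, hX, hpq⟩ := hS.exists_card_eq_seven hα hcard hdeg
  have hchoose : X.card.choose 2 = 3 * Fintype.card ι := by simp [hι, hXcard, Nat.choose]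
  obtain ⟨l, hl, hlX, ⟨i₀, h₀⟩, hneg⟩ := hS.exists_fano_labelling hX hι hXcard
  have hline (m : Fin 7) : ∃ i, T i = (fanoLine m).image l := by
    have hm : ∀ m : Fin 7, m = 0 ∨ m ∈ fanoLine 0 ∨ -m ∈ fanoLine 0 := by decide
    rcases hm m with rfl | hm | hm
    · exact ⟨i₀, h₀⟩
    · have hne : ∀ m ∈ fanoLine 0, 2 * m ≠ 3 * m := by decide
      obtain ⟨j, h2, h3⟩ := hS.exists_mem_and_mem hX hchoose (hlX (2 * m)) (hlX (3 * m))
        (hl.ne (hne m hm))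
      exact ⟨j, hS.eq_image_fanoLine hl h₀ hneg hm h2 h3⟩
    · simpa using hneg _ hm
  choose f hf using hline
  have hfano : Function.Injective fanoLine := by decide
  have hfinj : Function.Injective f := fun m m' h =>
    hfano (Finset.image_injective hl (by rw [← hf, ← hf, h]))
  let τ : Unit ≃ κ := Fintype.equivOfCardEq (by simp; lia)
  refine ⟨Sum.elim l ![p (τ ()), q (τ ())], Equiv.ofBijective f
    ((Fintype.bijective_iff_injective_and_card f).2 ⟨hfinj, by simp [hι]⟩), τ, ?_, hf, rfl, rfl⟩
  refine hl.sumElim ?_ ?_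
  · rw [← List.nodup_ofFn]
    simpa using hS.fst_ne_snd (τ ())
  · intro x y
    obtain ⟨hp, hq⟩ := hpq (τ ())
    fin_cases y
    exacts [ne_of_mem_of_not_mem (hlX x) hp, ne_of_mem_of_not_mem (hlX x) hq]

theorem exists_equiv [Fintype α] [Fintype κ] (hS : OrthogonalSystem T p q)
    (hα : Fintype.card α = 9) (hcard : Fintype.card ι + Fintype.card κ = 8) :
    (∃ (l : Option (Fin 4 ⊕ Fin 4) → α) (σ : Fin 4 ≃ ι) (τ : Fin 4 ≃ κ), Function.Injective l ∧
      ∀ j, T (σ j) = {l none, l (some (.inl j)), l (some (.inr j))} ∧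
        p (τ j) = l (some (.inl j)) ∧ q (τ j) = l (some (.inr j))) ∨
    ∃ (l : Fin 7 ⊕ Fin 2 → α) (σ : Fin 7 ≃ ι) (τ : Unit ≃ κ), Function.Injective l ∧
      (∀ m, T (σ m) = (fanoLine m).image (l ∘ .inl)) ∧
      p (τ ()) = l (.inr 0) ∧ q (τ ()) = l (.inr 1) := by
  by_cases hdeg : ∀ x, (Finset.univ.filter fun j => x ∈ T j).card ≤ 3
  · exact .inr (hS.exists_equiv_fano hα hcard hdeg)
  · push Not at hdeg
    obtain ⟨o, ho⟩ := hdeg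
    exact .inl (hS.exists_equiv_pencil hα hcard (hS.forall_mem_of_three_lt_degree ho))

end OrthogonalSystem

/-- The anticanonical class `-K = 3H - E₁ - ⋯ - E₉`. The reflection `A ↦ antiK - A` exchanges
the form of a class in Lemma 3.6 with coefficient `a` and the one with coefficient `3 - a`. -/
def antiK : ℤ × (Fin 9 → ℤ) := (3, fun _ => -1)

/-- The class `H - ∑_{i ∈ T} Eᵢ`. -/
def lineClass (T : Finset (Fin 9)) : ℤ × (Fin 9 → ℤ) := (1, fun x => if x ∈ T then -1 else 0)

theorem lineL9_eq_lineClass (i j k : Fin 9) : lineL9 i j k = lineClass {i, j, k} := by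
  simp [lineL9, lineClass]

theorem diffL9_snd {p q : Fin 9} (hpq : p ≠ q) :
    (diffL9 p q).2 = Pi.single p 1 - Pi.single q 1 := by
  ext x
  simp only [diffL9, Pi.sub_apply, Pi.single_apply]
  grind

theorem interL9_comm (A B : ℤ × (Fin 9 → ℤ)) : interL9 A B = interL9 B A := by
  simp only [interL9, mul_comm]

theorem interL9_sub_right (A B C : ℤ × (Fin 9 → ℤ)) :
    interL9 A (B - C) = interL9 A B - interL9 A C := by
  simp only [interL9, Prod.fst_sub, Prod.snd_sub, Pi.sub_apply, mul_sub, Finset.sum_sub_distrib]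
  ring

theorem interL9_sub_left (A B C : ℤ × (Fin 9 → ℤ)) :
    interL9 (A - B) C = interL9 A C - interL9 B C := by
  simp only [interL9_comm _ C, interL9_sub_right]

theorem interL9_lineClass_left (T : Finset (Fin 9)) (B : ℤ × (Fin 9 → ℤ)) :
    interL9 (lineClass T) B = B.1 + ∑ x ∈ T, B.2 x := by
  simp [interL9, lineClass, Finset.sum_ite_mem]

theorem interL9_diffL9_left {p q : Fin 9} (hpq : p ≠ q) (B : ℤ × (Fin 9 → ℤ)) :
    interL9 (diffL9 p q) B = B.2 q - B.2 p := by
  rw [interL9, diffL9_snd hpq]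
  simp [diffL9, sub_mul, Pi.single_apply]

theorem interL9_lineClass_lineClass (T T' : Finset (Fin 9)) :
    interL9 (lineClass T) (lineClass T') = 1 - (T ∩ T').card := by
  rw [interL9_lineClass_left]
  simp [lineClass, sub_eq_add_neg]

/-- The class is `H - Eᵢ - Eⱼ - E_k` or `Eᵢ - Eⱼ` for distinct indices: the forms of Lemma 3.6 with
`a = 1` and `a = 0`, to which `a = 2` and `a = 3` are reflected by `antiK`. -/
def IsStdRoot (R : ℤ × (Fin 9 → ℤ)) : Prop :=
  (∃ T : Finset (Fin 9), T.card = 3 ∧ R = lineClass T) ∨ ∃ p q, p ≠ q ∧ R = diffL9 p q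

theorem interL9_antiK_antiK : interL9 antiK antiK = 0 := by
  simp [interL9, antiK]

theorem IsStdRoot.interL9_antiK {R : ℤ × (Fin 9 → ℤ)} (hR : IsStdRoot R) :
    interL9 R antiK = 0 := by
  rcases hR with ⟨T, hT, rfl⟩ | ⟨p, q, hpq, rfl⟩
  · simp [interL9_lineClass_left, antiK, hT]
  · simp [interL9_diffL9_left hpq, antiK]

theorem IsStdRoot.interL9_eq_zero {A B R S : ℤ × (Fin 9 → ℤ)} (hR : IsStdRoot R)
    (hS : IsStdRoot S) (hA : A = R ∨ A = antiK - R) (hB : B = S ∨ B = antiK - S)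
    (hAB : interL9 A B = 0) : interL9 R S = 0 := by
  have hSK := interL9_comm antiK S ▸ hS.interL9_antiK
  rcases hA with rfl | rfl <;> rcases hB with rfl | rfl <;>
    simpa [interL9_sub_left, interL9_sub_right, interL9_antiK_antiK, hR.interL9_antiK, hSK]
      using hAB

theorem exists_isStdRoot {A : ℤ × (Fin 9 → ℤ)} {a : ℤ} {j : Fin 9} {S : Finset (Fin 9)}
    (hj : j ∉ S) (hS : (S.card : ℤ) = 2 * a + 1) (hA1 : A.1 = a)
    (hA2 : A.2 = fun x => if x = j then -(a - 1) else if x ∈ S then -1 else 0) :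
    ∃ R, IsStdRoot R ∧ (A = R ∨ A = antiK - R) := by
  have hSle : S.card ≤ 8 := by
    simpa [Finset.card_erase_of_mem] using
      Finset.card_le_card (show S ⊆ Finset.univ.erase j by grind)
  have hcompl : ((insert j S)ᶜ).card = 8 - S.card := by
    rw [Finset.card_compl, Finset.card_insert_of_notMem hj, Fintype.card_fin]
    lia
  have ha : a = 0 ∨ a = 1 ∨ a = 2 ∨ a = 3 := by lia
  rcases ha with rfl | rfl | rfl | rfl
  · obtain ⟨s, rfl⟩ := Finset.card_eq_one.1 (show S.card = 1 by lia)
    refine ⟨diffL9 j s, .inr ⟨_, _, by simpa using hj, rfl⟩, .inl (Prod.ext hA1 ?_)⟩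
    simp [hA2, diffL9]
  · refine ⟨lineClass S, .inl ⟨_, by lia, rfl⟩, .inl (Prod.ext hA1 ?_)⟩
    ext x
    simp only [hA2, lineClass]
    grind
  · refine ⟨lineClass (insert j S)ᶜ, .inl ⟨_, by lia, rfl⟩,
      .inr (Prod.ext (by simp [hA1, antiK, lineClass]) ?_)⟩
    ext x
    simp only [hA2, lineClass, antiK, Prod.snd_sub, Pi.sub_apply, Finset.mem_compl,
      Finset.mem_insert]
    grind
  · obtain ⟨s, hs⟩ := Finset.card_eq_one.1 (show ((insert j S)ᶜ).card = 1 by lia)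
    have hs' (x : Fin 9) : x = s ↔ x ∉ insert j S := by
      rw [← Finset.mem_compl, hs, Finset.mem_singleton]
    refine ⟨diffL9 j s, .inr ⟨_, _, fun h => (hs' j).1 h (by simp), rfl⟩,
      .inr (Prod.ext (by simp [hA1, antiK, diffL9]) ?_)⟩
    ext x
    simp only [hA2, diffL9, antiK, Prod.snd_sub, Pi.sub_apply, hs']
    grind

/-- The roots of configuration (c): four lines through the point `l none`, and the differences of
the two further points on each. -/
def pencilRoots (l : Option (Fin 4 ⊕ Fin 4) → Fin 9) : Fin 4 ⊕ Fin 4 → ℤ × (Fin 9 → ℤ) :=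
  Sum.elim (fun j => lineL9 (l none) (l (some (.inl j))) (l (some (.inr j))))
    fun j => diffL9 (l (some (.inl j))) (l (some (.inr j)))

/-- The roots of configuration (b): the lines of a Fano plane, and the difference of the two points
off that plane. -/
def fanoRoots (l : Fin 7 ⊕ Fin 2 → Fin 9) : Fin 7 ⊕ Unit → ℤ × (Fin 9 → ℤ) :=
  Sum.elim (fun m => lineClass ((fanoLine m).image (l ∘ .inl)))
    fun _ => diffL9 (l (.inr 0)) (l (.inr 1))

theorem orthogonalSystem_of_interL9 {ι κ : Type*} {T : ι → Finset (Fin 9)} {p q : κ → Fin 9}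
    (hT : ∀ i, (T i).card = 3) (hpq : ∀ k, p k ≠ q k)
    (hTT : ∀ i j, i ≠ j → interL9 (lineClass (T i)) (lineClass (T j)) = 0)
    (hdd : ∀ k k', k ≠ k' → interL9 (diffL9 (p k) (q k)) (diffL9 (p k') (q k')) = 0)
    (hdT : ∀ k i, interL9 (diffL9 (p k) (q k)) (lineClass (T i)) = 0) :
    OrthogonalSystem T p q where
  card_triple := hT
  card_inter i j hij := by
    have := hTT i j hij
    rw [interL9_lineClass_lineClass] at this
    lia
  injective := by
    have hdisj (k k' : κ) (hk : k ≠ k') : p k ≠ p k' ∧ q k ≠ q k' ∧ p k ≠ q k' := by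
      have h := hdd k k' hk
      have := hpq k
      have := hpq k'
      rw [interL9_diffL9_left (hpq k)] at h
      simp only [diffL9] at h
      grind
    rintro (k | k) (k' | k') h <;> simp only [Sum.elim_inl, Sum.elim_inr] at h <;> grind
  mem_iff k i := by
    have := hdT k i
    simp only [interL9_diffL9_left (hpq k), lineClass] at this
    grind

theorem IsStdRoot.exists_equiv {ν : Type*} [Fintype ν] {R : ν → ℤ × (Fin 9 → ℤ)}
    (hR : ∀ k, IsStdRoot (R k)) (hν : Fintype.card ν = 8)
    (hperp : ∀ j k, j ≠ k → interL9 (R j) (R k) = 0) :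
    (∃ (l : Option (Fin 4 ⊕ Fin 4) → Fin 9) (σ : Fin 4 ⊕ Fin 4 ≃ ν), Function.Injective l ∧
      ∀ z, R (σ z) = pencilRoots l z) ∨
    ∃ (l : Fin 7 ⊕ Fin 2 → Fin 9) (σ : Fin 7 ⊕ Unit ≃ ν), Function.Injective l ∧
      ∀ z, R (σ z) = fanoRoots l z := by
  classical
  let P (k : ν) : Prop := ∃ T, T.card = 3 ∧ R k = lineClass T
  choose T hT hRT using fun k : {k // P k} => k.2
  choose p q hpq hRpq using fun k : {k // ¬ P k} => (hR k).resolve_left k.2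
  have hS : OrthogonalSystem T p q := orthogonalSystem_of_interL9 hT hpq
    (fun i j hij => hRT i ▸ hRT j ▸ hperp i j (by simpa [Subtype.ext_iff] using hij))
    (fun i j hij => hRpq i ▸ hRpq j ▸ hperp i j (by simpa [Subtype.ext_iff] using hij))
    (fun k i => hRpq k ▸ hRT i ▸ hperp k i fun h => k.2 (h ▸ i.2))
  have hcard : Fintype.card {k // P k} + Fintype.card {k // ¬ P k} = 8 := by
    rw [← Fintype.card_sum, Fintype.card_congr (Equiv.sumCompl P), hν]
  rcases hS.exists_equiv (by simp) hcard with ⟨l, σ, τ, hl, h⟩ | ⟨l, σ, τ, hl, hline, hp, hq⟩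
  · refine .inl ⟨l, (σ.sumCongr τ).trans (Equiv.sumCompl P), hl, ?_⟩
    rintro (j | j)
    · simp [hRT, pencilRoots, lineL9_eq_lineClass, h]
    · simp [hRpq, pencilRoots, h]
  · refine .inr ⟨l, (σ.sumCongr τ).trans (Equiv.sumCompl P), hl, ?_⟩
    rintro (m | ⟨⟩)
    · simp [hRT, fanoRoots, hline]
    · simp [hRpq, fanoRoots, hp, hq]

theorem areaL9_sub (h : ℝ) (e : Fin 9 → ℝ) (A B : ℤ × (Fin 9 → ℤ)) :
    areaL9 h e (A - B) = areaL9 h e A - areaL9 h e B := by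
  simp only [areaL9, Prod.fst_sub, Prod.snd_sub, Pi.sub_apply, Int.cast_sub, sub_mul,
    Finset.sum_sub_distrib]
  ring

theorem areaL9_antiK (h : ℝ) (e : Fin 9 → ℝ) : areaL9 h e antiK = 3 * h - ∑ i, e i := by
  simp [areaL9, antiK, sub_eq_add_neg]

theorem areaL9_lineClass (h : ℝ) (e : Fin 9 → ℝ) (T : Finset (Fin 9)) :
    areaL9 h e (lineClass T) = h - ∑ x ∈ T, e x := by
  simp [areaL9, lineClass, Finset.sum_ite_mem, sub_eq_add_neg]

theorem areaL9_diffL9 (h : ℝ) (e : Fin 9 → ℝ) {p q : Fin 9} (hpq : p ≠ q) :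
    areaL9 h e (diffL9 p q) = e p - e q := by
  rw [areaL9, diffL9_snd hpq]
  simp [diffL9, sub_mul, Pi.single_apply]

theorem areaL9_le_of_eq_or_eq_antiK_sub {h : ℝ} {e : Fin 9 → ℝ} {A R : ℤ × (Fin 9 → ℤ)}
    (hA : A = R ∨ A = antiK - R) (hK : 2 * areaL9 h e A ≤ areaL9 h e antiK) :
    areaL9 h e A ≤ areaL9 h e R := by
  rcases hA with rfl | rfl
  · rfl
  · rw [areaL9_sub] at hK ⊢
    linarith

/-- The reducedness condition on area data: no class `H - Eᵢ - Eⱼ - E_k` has negative area. -/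
def IsReducedL9 (h : ℝ) (e : Fin 9 → ℝ) : Prop :=
  ∀ i j k : Fin 9, i ≠ j → i ≠ k → j ≠ k → 0 ≤ h - e i - e j - e k

section Pencil

variable {h : ℝ} {e : Fin 9 → ℝ} {l : Option (Fin 4 ⊕ Fin 4) → Fin 9}

theorem areaL9_pencilRoots_inl (hl : Function.Injective l) (j : Fin 4) :
    areaL9 h e (pencilRoots l (.inl j)) =
      h - e (l none) - e (l (some (.inl j))) - e (l (some (.inr j))) := by
  rw [pencilRoots, Sum.elim_inl, lineL9_eq_lineClass, areaL9_lineClass,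
    Finset.sum_insert (by simp [hl.eq_iff]), Finset.sum_insert (by simp [hl.eq_iff]),
    Finset.sum_singleton]
  ring

theorem areaL9_pencilRoots_inr (hl : Function.Injective l) (j : Fin 4) :
    areaL9 h e (pencilRoots l (.inr j)) = e (l (some (.inl j))) - e (l (some (.inr j))) :=
  areaL9_diffL9 h e (hl.ne (by simp))

theorem areaL9_antiK_eq_pencil (hl : Function.Injective l) :
    areaL9 h e antiK = 3 * h - e (l none) -
      ∑ j, (e (l (some (.inl j))) + e (l (some (.inr j)))) := by
  have hbij := (Fintype.bijective_iff_injective_and_card l).2 ⟨hl, by simp⟩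
  rw [areaL9_antiK, ← hbij.sum_comp, Fintype.sum_option, Fintype.sum_sum_type,
    Finset.sum_add_distrib]
  ring

theorem exists_add_areaL9_le_areaL9_antiK
    (h3pt : IsReducedL9 h e) (hl : Function.Injective l) (z : Fin 4 ⊕ Fin 4) :
    ∃ x y, areaL9 h e (pencilRoots l z) + areaL9 h e (pencilRoots l x) +
      areaL9 h e (pencilRoots l y) ≤ areaL9 h e antiK := by
  have hsum (f : Fin 4 → ℝ) (j : Fin 4) : ∑ i, f i = f j + f (j + 1) + f (j + 2) + f (j + 3) := by
    rw [← Equiv.sum_comp (Equiv.addLeft j), Fin.sum_univ_four]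
    simp
  rcases z with j | j
  all_goals rw [areaL9_antiK_eq_pencil hl, hsum _ j]
  · refine ⟨.inr (j + 1), .inr (j + 2), ?_⟩
    simp only [areaL9_pencilRoots_inl hl, areaL9_pencilRoots_inr hl]
    have := h3pt (l (some (.inl (j + 1)))) (l (some (.inl (j + 2)))) (l (some (.inl (j + 3))))
      (hl.ne (by simp)) (hl.ne (by simp)) (hl.ne (by simp))
    have := h3pt (l (some (.inl (j + 1)))) (l (some (.inl (j + 2)))) (l (some (.inr (j + 3))))
      (hl.ne (by simp)) (hl.ne (by simp)) (hl.ne (by simp))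
    linarith
  · refine ⟨.inr (j + 1), .inl (j + 2), ?_⟩
    simp only [areaL9_pencilRoots_inl hl, areaL9_pencilRoots_inr hl]
    have := h3pt (l (some (.inl j))) (l (some (.inl (j + 1)))) (l (some (.inl (j + 3))))
      (hl.ne (by simp)) (hl.ne (by simp)) (hl.ne (by simp))
    have := h3pt (l (some (.inl j))) (l (some (.inl (j + 1)))) (l (some (.inr (j + 3))))
      (hl.ne (by simp)) (hl.ne (by simp)) (hl.ne (by simp))
    linarith

theorem eq_pencilRoots_of_area {δ₁ δ₂ : ℝ} (hδ12 : δ₁ < 2 * δ₂)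
    (h3pt : IsReducedL9 h e) (hK : 4 * δ₁ < areaL9 h e antiK) (hl : Function.Injective l)
    {G : Fin 4 ⊕ Fin 4 → ℤ × (Fin 9 → ℤ)}
    (hG : ∀ z, G z = pencilRoots l z ∨ G z = antiK - pencilRoots l z)
    (hδ₁ : ∀ z, areaL9 h e (G z) ≤ δ₁) (hδ₂ : ∀ z, δ₂ ≤ areaL9 h e (G z)) (z : Fin 4 ⊕ Fin 4) :
    G z = pencilRoots l z := by
  have hroot (z) : δ₂ ≤ areaL9 h e (pencilRoots l z) :=
    (hδ₂ z).trans (areaL9_le_of_eq_or_eq_antiK_sub (hG z) (by linarith [hδ₁ z, hδ₂ z]))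
  refine (hG z).resolve_right fun hz => ?_
  obtain ⟨x, y, hxy⟩ := exists_add_areaL9_le_areaL9_antiK h3pt hl z
  have := hδ₁ z
  rw [hz, areaL9_sub] at this
  linarith [hroot x, hroot y]

end Pencil

section Fano

/-- The set of all `d` for which the line `fanoLine (p + d)` misses the point `p`, for any `p`. -/
def fanoQuad : Finset (Fin 7) := {0, 1, 2, 4}

variable {h : ℝ} {e : Fin 9 → ℝ} {l : Fin 7 ⊕ Fin 2 → Fin 9}

theorem areaL9_fanoRoots_inl (hl : Function.Injective l) (m : Fin 7) :
    areaL9 h e (fanoRoots l (.inl m)) =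
      h - e (l (.inl (m + 1))) - e (l (.inl (m + 2))) - e (l (.inl (m + 4))) := by
  rw [fanoRoots, Sum.elim_inl, areaL9_lineClass,
    Finset.sum_image (hl.comp Sum.inl_injective).injOn, fanoLine,
    Finset.sum_insert (by simp), Finset.sum_insert (by simp),
    Finset.sum_singleton]
  simp only [Function.comp_apply]
  ring

theorem areaL9_fanoRoots_inr (hl : Function.Injective l) (u : Unit) :
    areaL9 h e (fanoRoots l (.inr u)) = e (l (.inr 0)) - e (l (.inr 1)) :=
  areaL9_diffL9 h e (hl.ne (by simp))

theorem areaL9_antiK_eq_fano (hl : Function.Injective l) :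
    areaL9 h e antiK =
      3 * h - ∑ m, e (l (.inl m)) - e (l (.inr 0)) - e (l (.inr 1)) := by
  have hbij := (Fintype.bijective_iff_injective_and_card l).2 ⟨hl, by simp⟩
  rw [areaL9_antiK, ← hbij.sum_comp, Fintype.sum_sum_type, Fin.sum_univ_two]
  ring

theorem forall_mem_fanoQuad {P : Fin 7 → Prop} :
    (∀ d ∈ fanoQuad, P d) ↔ P 0 ∧ P 1 ∧ P 2 ∧ P 4 := by
  simp [fanoQuad]

theorem sum_erase_fanoQuad (f : Fin 7 → ℝ) {d : Fin 7} (hd : d ∈ fanoQuad) :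
    ∑ c ∈ fanoQuad.erase d, f c = f 0 + f 1 + f 2 + f 4 - f d := by
  rw [Finset.sum_erase_eq_sub hd, fanoQuad, Finset.sum_insert (by decide),
    Finset.sum_insert (by decide), Finset.sum_insert (by decide), Finset.sum_singleton]
  ring

theorem areaL9_le_sum_erase_fanoQuad
    (h3pt : IsReducedL9 h e)
    (hl : Function.Injective l) (p : Fin 7) {d : Fin 7} (hd : d ∈ fanoQuad) :
    areaL9 h e (fanoRoots l (.inl (p + d))) ≤
      ∑ c ∈ fanoQuad.erase d, areaL9 h e (fanoRoots l (.inl (p + c))) := by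
  have hx (a b c : Fin 7) (hab : a ≠ b) (hac : a ≠ c) (hbc : b ≠ c) :
      0 ≤ h - e (l (.inl (p + a))) - e (l (.inl (p + b))) - e (l (.inl (p + c))) :=
    h3pt _ _ _ (hl.ne (by simpa)) (hl.ne (by simpa)) (hl.ne (by simpa))
  rw [sum_erase_fanoQuad _ hd]
  simp only [areaL9_fanoRoots_inl hl, add_assoc]
  revert d
  rw [forall_mem_fanoQuad]
  refine ⟨?_, ?_, ?_, ?_⟩ <;> simp only [Fin.reduceAdd, Fin.isValue, zero_add]
  · linarith [hx 3 5 6 (by decide) (by decide) (by decide)]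
  · linarith [hx 1 4 6 (by decide) (by decide) (by decide)]
  · linarith [hx 1 2 5 (by decide) (by decide) (by decide)]
  · linarith [hx 2 3 4 (by decide) (by decide) (by decide)]

theorem sum_erase_fanoQuad_le_two_mul_areaL9_antiK
    (h3pt : IsReducedL9 h e)
    (hl : Function.Injective l) (p : Fin 7) {d : Fin 7} (hd : d ∈ fanoQuad) :
    ∑ c ∈ fanoQuad.erase d, areaL9 h e (fanoRoots l (.inl (p + c))) ≤
      2 * areaL9 h e antiK := by
  have hd0 : 0 ≠ d + 1 ∧ 0 ≠ d + 4 := by revert d; decide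
  have h₁ := h3pt (l (.inl (p + 0))) (l (.inl (p + (d + 1)))) (l (.inr 0))
    (hl.ne fun heq => hd0.1 (by simpa only [Sum.inl.injEq, add_right_inj] using heq))
    (hl.ne (by simp)) (hl.ne (by simp))
  have h₂ := h3pt (l (.inl (p + (d + 2)))) (l (.inr 0)) (l (.inr 1))
    (hl.ne (by simp)) (hl.ne (by simp)) (hl.ne (by simp))
  have h₃ := h3pt (l (.inl (p + 0))) (l (.inl (p + (d + 4)))) (l (.inr 1))
    (hl.ne fun heq => hd0.2 (by simpa only [Sum.inl.injEq, add_right_inj] using heq))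
    (hl.ne (by simp)) (hl.ne (by simp))
  rw [sum_erase_fanoQuad _ hd, areaL9_antiK_eq_fano hl, ← Equiv.sum_comp (Equiv.addLeft p),
    Fin.sum_univ_seven]
  simp only [areaL9_fanoRoots_inl hl, add_assoc, Equiv.coe_addLeft]
  clear hd0
  revert d
  rw [forall_mem_fanoQuad]
  refine ⟨?_, ?_, ?_, ?_⟩ <;> simp only [Fin.reduceAdd, Fin.isValue, zero_add] <;>
    intros <;> linarith

theorem eq_empty_or_exists_forall_mem_iff_notMem_fanoQuad (Φ : Finset (Fin 7))
    (hthree : ∀ p, ∀ d ∈ fanoQuad, ∃ c ∈ fanoQuad.erase d, p + c ∉ Φ)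
    (hone : ∀ p, ∀ d ∈ fanoQuad, p + d ∈ Φ → ∃ c ∈ fanoQuad.erase d, p + c ∈ Φ) :
    Φ = ∅ ∨ ∃ p, ∀ d, p + d ∈ Φ ↔ d ∉ fanoQuad := by
  -- `Φ` meets each translate of `fanoQuad` in 0 or 2 points: it is a word of even overlap with the
  -- complements of lines, that is, a Hamming codeword, and the weights 4 and 7 are excluded.
  revert Φ
  decide +kernel

theorem areaL9_inr_add_sum_erase_le_areaL9_antiK_add
    (h3pt : IsReducedL9 h e)
    (hl : Function.Injective l) (p : Fin 7) {d : Fin 7} (hd : d ∉ fanoQuad) :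
    areaL9 h e (fanoRoots l (.inr ())) +
        ∑ c ∈ fanoQuadᶜ.erase d, areaL9 h e (fanoRoots l (.inl (p + c))) ≤
      areaL9 h e antiK + areaL9 h e (fanoRoots l (.inl (p + d))) := by
  have hx (a b : Fin 7) (hab : a ≠ b) :
      0 ≤ h - e (l (.inl (p + a))) - e (l (.inl (p + b))) - e (l (.inr 0)) :=
    h3pt _ _ _ (hl.ne (by simpa)) (hl.ne (by simp)) (hl.ne (by simp))
  have hd' : d = 3 ∨ d = 5 ∨ d = 6 := by revert d; decide
  rw [Finset.sum_erase_eq_sub (Finset.mem_compl.2 hd), show fanoQuadᶜ = {3, 5, 6} by decide,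
    Finset.sum_insert (by decide), Finset.sum_insert (by decide), Finset.sum_singleton,
    areaL9_antiK_eq_fano hl, ← Equiv.sum_comp (Equiv.addLeft p), Fin.sum_univ_seven,
    areaL9_fanoRoots_inr hl]
  simp only [areaL9_fanoRoots_inl hl, add_assoc, Equiv.coe_addLeft]
  rcases hd' with rfl | rfl | rfl <;> simp only [Fin.reduceAdd, Fin.isValue]
  · linarith [hx 4 5 (by decide)]
  · linarith [hx 2 6 (by decide)]
  · linarith [hx 1 3 (by decide)]

theorem exists_add_areaL9_le_two_mul_areaL9_antiK
    (h3pt : IsReducedL9 h e)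
    (hl : Function.Injective l) (p : Fin 7) {d : Fin 7} (hd : d ∈ fanoQuad) :
    ∃ c ∈ fanoQuad, ∃ a ∉ fanoQuad, ∃ b ∉ fanoQuad,
      areaL9 h e (fanoRoots l (.inl (p + d))) + areaL9 h e (fanoRoots l (.inl (p + c))) +
        areaL9 h e (fanoRoots l (.inl (p + a))) + areaL9 h e (fanoRoots l (.inl (p + b))) ≤
      2 * areaL9 h e antiK := by
  have hx (a : Fin 7) :
      0 ≤ h - e (l (.inl (p + a))) - e (l (.inr 0)) - e (l (.inr 1)) :=
    h3pt _ _ _ (hl.ne (by simp)) (hl.ne (by simp)) (hl.ne (by simp))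
  suffices H : ∃ c ∈ fanoQuad, areaL9 h e (fanoRoots l (.inl (p + d))) +
      areaL9 h e (fanoRoots l (.inl (p + c))) + areaL9 h e (fanoRoots l (.inl (p + 3))) +
        areaL9 h e (fanoRoots l (.inl (p + 5))) ≤ 2 * areaL9 h e antiK by
    obtain ⟨c, hc, hle⟩ := H
    exact ⟨c, hc, 3, by decide, 5, by decide, hle⟩
  rw [areaL9_antiK_eq_fano hl, ← Equiv.sum_comp (Equiv.addLeft p), Fin.sum_univ_seven]
  simp only [areaL9_fanoRoots_inl hl, add_assoc, Equiv.coe_addLeft]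
  revert d
  rw [forall_mem_fanoQuad]
  refine ⟨⟨4, by decide, ?_⟩, ⟨2, by decide, ?_⟩, ⟨1, by decide, ?_⟩, ⟨0, by decide, ?_⟩⟩ <;>
    simp only [Fin.reduceAdd, Fin.isValue, zero_add] <;> linarith [hx 1, hx 3]

theorem areaL9_inr_add_areaL9_le_two_mul {δ : ℝ}
    (h3pt : IsReducedL9 h e)
    (hl : Function.Injective l) {G : Fin 7 ⊕ Unit → ℤ × (Fin 9 → ℤ)} (p : Fin 7)
    (hG : ∀ c ∉ fanoQuad, G (.inl (p + c)) = antiK - fanoRoots l (.inl (p + c))) {d : Fin 7}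
    (hd : d ∉ fanoQuad)
    (hδ : ∀ c ∉ fanoQuad, c ≠ d → areaL9 h e (G (.inl (p + c))) = δ) :
    areaL9 h e (fanoRoots l (.inr ())) + areaL9 h e (G (.inl (p + d))) ≤ 2 * δ := by
  have hle := areaL9_inr_add_sum_erase_le_areaL9_antiK_add h3pt hl p hd
  have hroot (c) (hc : c ∉ fanoQuad) : areaL9 h e (fanoRoots l (.inl (p + c))) =
      areaL9 h e antiK - areaL9 h e (G (.inl (p + c))) := by
    rw [hG c hc, areaL9_sub, sub_sub_cancel]
  have hcard : (fanoQuadᶜ.erase d).card = 2 := by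
    rw [Finset.card_erase_of_mem (Finset.mem_compl.2 hd)]
    rfl
  have hsum : ∑ c ∈ fanoQuadᶜ.erase d, areaL9 h e (fanoRoots l (.inl (p + c))) =
      2 * (areaL9 h e antiK - δ) := by
    rw [Finset.sum_eq_card_nsmul (b := areaL9 h e antiK - δ), hcard, nsmul_eq_mul, Nat.cast_ofNat]
    intro c hc
    simp only [Finset.mem_erase, Finset.mem_compl] at hc
    rw [hroot c hc.2, hδ c hc.2 hc.1]
  rw [hsum, hroot d hd] at hle
  linarith

theorem not_forall_eq_fanoRoots_iff_mem_fanoQuad {δ₁ δ₂ : ℝ} (hδ21 : δ₂ < δ₁)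
    (h3pt : IsReducedL9 h e) (hK : 2 * δ₁ ≤ areaL9 h e antiK) (hl : Function.Injective l)
    {G : Fin 7 ⊕ Unit → ℤ × (Fin 9 → ℤ)}
    (hG : ∀ z, G z = fanoRoots l z ∨ G z = antiK - fanoRoots l z) {z₀ : Fin 7 ⊕ Unit}
    (hδ₁ : areaL9 h e (G z₀) = δ₁) (hδ₂ : ∀ z, z ≠ z₀ → areaL9 h e (G z) = δ₂) (p : Fin 7) :
    ¬ ∀ d, G (.inl (p + d)) = fanoRoots l (.inl (p + d)) ↔ d ∈ fanoQuad := by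
  intro hp
  have hline (d) (hd : d ∉ fanoQuad) : G (.inl (p + d)) = antiK - fanoRoots l (.inl (p + d)) :=
    (hG _).resolve_left (mt (hp d).1 hd)
  have hinr : areaL9 h e (G (.inr ())) ≤ areaL9 h e (fanoRoots l (.inr ())) := by
    refine areaL9_le_of_eq_or_eq_antiK_sub (hG _) ?_
    rcases eq_or_ne (.inr ()) z₀ with hz | hz
    · rwa [hz, hδ₁]
    · linarith [hδ₂ _ hz]
  rcases z₀ with m | ⟨⟩
  · obtain ⟨d, rfl⟩ : ∃ d, m = p + d := ⟨m - p, by simp⟩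
    have hne (k) (hk : k ≠ d) : areaL9 h e (G (.inl (p + k))) = δ₂ := hδ₂ _ (by simpa)
    by_cases hd : d ∈ fanoQuad
    · obtain ⟨c, hc, a, ha, b, hb, hle⟩ := exists_add_areaL9_le_two_mul_areaL9_antiK h3pt hl p hd
      have hGa := hne a (ne_of_mem_of_not_mem hd ha).symm
      have hGb := hne b (ne_of_mem_of_not_mem hd hb).symm
      rw [hline a ha, areaL9_sub] at hGa
      rw [hline b hb, areaL9_sub] at hGb
      rw [← (hp d).2 hd, ← (hp c).2 hc, hδ₁] at hle
      rcases eq_or_ne c d with rfl | hcd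
      · linarith
      · linarith [hne c hcd]
    · linarith [areaL9_inr_add_areaL9_le_two_mul h3pt hl p hline hd fun c _ => hne c,
        hδ₂ (.inr ()) (by simp)]
  · linarith [areaL9_inr_add_areaL9_le_two_mul h3pt hl p hline (d := 3) (by decide)
      fun c _ _ => hδ₂ _ (by simp), hδ₂ (.inl (p + 3)) (by simp)]

theorem eq_fanoRoots_of_area {δ₁ δ₂ : ℝ} (hδ21 : δ₂ < δ₁) (hδ12 : δ₁ < 2 * δ₂)
    (h3pt : IsReducedL9 h e) (hK : 4 * δ₁ < areaL9 h e antiK) (hl : Function.Injective l)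
    {G : Fin 7 ⊕ Unit → ℤ × (Fin 9 → ℤ)}
    (hG : ∀ z, G z = fanoRoots l z ∨ G z = antiK - fanoRoots l z) {z₀ : Fin 7 ⊕ Unit}
    (hδ₁ : areaL9 h e (G z₀) = δ₁) (hδ₂ : ∀ z, z ≠ z₀ → areaL9 h e (G z) = δ₂) (m : Fin 7) :
    G (.inl m) = fanoRoots l (.inl m) := by
  have hle (z) : areaL9 h e (G z) ≤ δ₁ := by
    rcases eq_or_ne z z₀ with rfl | hz
    · exact hδ₁.le
    · exact hδ₂ z hz ▸ hδ21.le
  let Φ := Finset.univ.filter fun m => G (.inl m) ≠ fanoRoots l (.inl m)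
  have hΦ (m) : m ∈ Φ ↔ G (.inl m) ≠ fanoRoots l (.inl m) := Finset.mem_filter_univ m
  have harea_mem (m) (hm : m ∈ Φ) :
      areaL9 h e antiK - δ₁ ≤ areaL9 h e (fanoRoots l (.inl m)) := by
    have := hle (.inl m)
    rw [(hG _).resolve_left ((hΦ m).1 hm), areaL9_sub] at this
    linarith
  have harea_notMem (m) (hm : m ∉ Φ) : areaL9 h e (fanoRoots l (.inl m)) ≤ δ₁ := by
    rw [← not_not.1 (mt (hΦ m).2 hm)]
    exact hle _
  have hcard : ∀ d ∈ fanoQuad, (fanoQuad.erase d).card = 3 := by decide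
  have hthree (p) (d) (hd : d ∈ fanoQuad) : ∃ c ∈ fanoQuad.erase d, p + c ∉ Φ := by
    by_contra! hmem
    have hsum := Finset.card_nsmul_le_sum _ _ _ fun c hc => harea_mem _ (hmem c hc)
    rw [hcard d hd, nsmul_eq_mul, Nat.cast_ofNat] at hsum
    linarith [sum_erase_fanoQuad_le_two_mul_areaL9_antiK h3pt hl p hd]
  have hone (p) (d) (hd : d ∈ fanoQuad) (hpd : p + d ∈ Φ) :
      ∃ c ∈ fanoQuad.erase d, p + c ∈ Φ := by
    by_contra! hmem
    have hsum := Finset.sum_le_card_nsmul _ _ _ fun c hc => harea_notMem _ (hmem c hc)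
    rw [hcard d hd, nsmul_eq_mul, Nat.cast_ofNat] at hsum
    linarith [areaL9_le_sum_erase_fanoQuad h3pt hl p hd, harea_mem _ hpd]
  rcases eq_empty_or_exists_forall_mem_iff_notMem_fanoQuad Φ hthree hone with hΦ₀ | ⟨p, hp⟩
  · simpa [hΦ₀] using hΦ m
  · refine (not_forall_eq_fanoRoots_iff_mem_fanoQuad hδ21 h3pt (by linarith) hl hG hδ₁ hδ₂ p
      fun d => ?_).elim
    rw [← not_iff_not, ← ne_eq, ← hΦ, hp]

end Fano

theorem exists_equiv_of_eq_or_eq_antiK_sub {ν : Type*} [Fintype ν] {F : ν → ℤ × (Fin 9 → ℤ)}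
    (hF : ∀ k, ∃ R, IsStdRoot R ∧ (F k = R ∨ F k = antiK - R)) (hν : Fintype.card ν = 8)
    (hperp : ∀ j k, j ≠ k → interL9 (F j) (F k) = 0) :
    (∃ (l : Option (Fin 4 ⊕ Fin 4) → Fin 9) (σ : Fin 4 ⊕ Fin 4 ≃ ν), Function.Injective l ∧
      ∀ z, F (σ z) = pencilRoots l z ∨ F (σ z) = antiK - pencilRoots l z) ∨
    ∃ (l : Fin 7 ⊕ Fin 2 → Fin 9) (σ : Fin 7 ⊕ Unit ≃ ν), Function.Injective l ∧
      ∀ z, F (σ z) = fanoRoots l z ∨ F (σ z) = antiK - fanoRoots l z := by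
  choose R hR hFR using hF
  rcases IsStdRoot.exists_equiv hR hν
    fun j k hjk => (hR j).interL9_eq_zero (hR k) (hFR j) (hFR k) (hperp j k hjk)
    with ⟨l, σ, hl, hσ⟩ | ⟨l, σ, hl, hσ⟩
  · exact .inl ⟨l, σ, hl, fun z => hσ z ▸ hFR (σ z)⟩
  · exact .inr ⟨l, σ, hl, fun z => hσ z ▸ hFR (σ z)⟩

theorem fanoRoots_inl_eq_lineL9 (l : Fin 7 ⊕ Fin 2 → Fin 9) {m i j k : Fin 7}
    (hm : fanoLine m = {i, j, k}) :
    fanoRoots l (.inl m) = lineL9 (l (.inl i)) (l (.inl j)) (l (.inl k)) := by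
  simp [fanoRoots, hm, lineL9_eq_lineClass, Finset.image_insert]

theorem antiK_sub_diffL9_eq_cubicL9 {i : Fin 8 → Fin 9} (hi : Function.Injective i) {q : Fin 9}
    (hq : ∀ k, i k ≠ q) : antiK - diffL9 (i 0) q = cubicL9 i := by
  have himage : Finset.univ.image i = {q}ᶜ := by
    refine Finset.eq_of_subset_of_card_le (by simpa [Finset.subset_iff] using hq) ?_
    rw [Finset.card_image_of_injective _ hi, Finset.card_compl]
    simp
  refine Prod.ext rfl (funext fun x => ?_)
  simp only [antiK, diffL9, cubicL9, himage, Prod.snd_sub, Pi.sub_apply, Finset.mem_compl,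
    Finset.mem_singleton]
  grind

theorem stmt15_general (h : ℝ) (e : Fin 9 → ℝ)
    (h3pt : ∀ i j k : Fin 9, i ≠ j → i ≠ k → j ≠ k → 0 ≤ h - e i - e j - e k)
    (F : Fin 8 → ℤ × (Fin 9 → ℤ))
    (hform : ∀ k, ∃ (a : ℤ) (j : Fin 9) (S : Finset (Fin 9)),
      j ∉ S ∧ (S.card : ℤ) = 2 * a + 1 ∧ (F k).1 = a ∧
      (F k).2 = fun x => if x = j then -(a - 1) else if x ∈ S then -1 else 0)
    (hperp : ∀ j k : Fin 8, j ≠ k → interL9 (F j) (F k) = 0)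
    (δ₁ δ₂ : ℝ) (hδ21 : δ₂ < δ₁) (hδ12 : δ₁ < 2 * δ₂) (hδ1K : 4 * δ₁ < 3 * h - ∑ i, e i)
    (k₀ : Fin 8) (harea1 : areaL9 h e (F k₀) = δ₁)
    (harea2 : ∀ k, k ≠ k₀ → areaL9 h e (F k) = δ₂) :
    ∃ σ : Equiv.Perm (Fin 8),
      (∃ i : Fin 8 → Fin 9, Function.Injective i ∧
        F (σ 0) = cubicL9 i ∧
        F (σ 1) = lineL9 (i 1) (i 2) (i 3) ∧
        F (σ 2) = lineL9 (i 1) (i 4) (i 5) ∧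
        F (σ 3) = lineL9 (i 1) (i 6) (i 7) ∧
        F (σ 4) = lineL9 (i 2) (i 4) (i 6) ∧
        F (σ 5) = lineL9 (i 2) (i 5) (i 7) ∧
        F (σ 6) = lineL9 (i 3) (i 4) (i 7) ∧
        F (σ 7) = lineL9 (i 3) (i 5) (i 6)) ∨
      (∃ l : Fin 9 → Fin 9, Function.Injective l ∧
        F (σ 0) = lineL9 (l 0) (l 1) (l 2) ∧
        F (σ 1) = lineL9 (l 0) (l 3) (l 4) ∧
        F (σ 2) = lineL9 (l 0) (l 5) (l 6) ∧
        F (σ 3) = lineL9 (l 1) (l 3) (l 5) ∧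
        F (σ 4) = lineL9 (l 2) (l 4) (l 5) ∧
        F (σ 5) = lineL9 (l 1) (l 4) (l 6) ∧
        F (σ 6) = lineL9 (l 2) (l 3) (l 6) ∧
        F (σ 7) = diffL9 (l 7) (l 8)) ∨
      (∃ l : Fin 9 → Fin 9, Function.Injective l ∧
        F (σ 0) = lineL9 (l 0) (l 1) (l 2) ∧
        F (σ 1) = lineL9 (l 0) (l 3) (l 4) ∧
        F (σ 2) = lineL9 (l 0) (l 5) (l 6) ∧
        F (σ 3) = lineL9 (l 0) (l 7) (l 8) ∧
        F (σ 4) = diffL9 (l 1) (l 2) ∧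
        F (σ 5) = diffL9 (l 3) (l 4) ∧
        F (σ 6) = diffL9 (l 5) (l 6) ∧
        F (σ 7) = diffL9 (l 7) (l 8)) := by
  rw [← areaL9_antiK] at hδ1K
  have hroot (k) : ∃ R, IsStdRoot R ∧ (F k = R ∨ F k = antiK - R) := by
    obtain ⟨a, j, S, hj, hS, h1, h2⟩ := hform k
    exact exists_isStdRoot hj hS h1 h2
  have hle (k) : δ₂ ≤ areaL9 h e (F k) ∧ areaL9 h e (F k) ≤ δ₁ := by
    rcases eq_or_ne k k₀ with rfl | hk
    · exact ⟨hδ21.le.trans_eq harea1.symm, harea1.le⟩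
    · exact ⟨(harea2 k hk).ge, (harea2 k hk).trans_le hδ21.le⟩
  rcases exists_equiv_of_eq_or_eq_antiK_sub hroot (Fintype.card_fin 8) hperp with
    ⟨l, σ, hl, hσ⟩ | ⟨l, σ, hl, hσ⟩
  · have hF := eq_pencilRoots_of_area hδ12 h3pt hδ1K hl hσ (fun z => (hle _).2) fun z => (hle _).1
    exact ⟨finSumFinEquiv.symm.trans σ, .inr <| .inr
      ⟨l ∘ ![none, some (.inl 0), some (.inr 0), some (.inl 1), some (.inr 1), some (.inl 2),
        some (.inr 2), some (.inl 3), some (.inr 3)], hl.comp (by decide),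
        hF (.inl 0), hF (.inl 1), hF (.inl 2), hF (.inl 3),
        hF (.inr 0), hF (.inr 1), hF (.inr 2), hF (.inr 3)⟩⟩
  · have hF := eq_fanoRoots_of_area hδ21 hδ12 h3pt hδ1K hl hσ (z₀ := σ.symm k₀) (by simpa)
      fun z hz => harea2 _ (by simpa [← Equiv.eq_symm_apply])
    have hline {m i j k} (hm : fanoLine m = {i, j, k} := by decide) :
        F (σ (.inl m)) = lineL9 (l (.inl i)) (l (.inl j)) (l (.inl k)) :=
      (hF m).trans (fanoRoots_inl_eq_lineL9 l hm)
    rcases hσ (.inr ()) with hdiff | hdiff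
    · let τ : Fin 8 ≃ Fin 7 ⊕ Unit := .ofBijective
        ![.inl 6, .inl 5, .inl 3, .inl 0, .inl 2, .inl 4, .inl 1, .inr ()] (by decide)
      exact ⟨τ.trans σ, .inr <| .inl
        ⟨l ∘ ![.inl 0, .inl 1, .inl 3, .inl 2, .inl 6, .inl 4, .inl 5, .inr 0, .inr 1],
          hl.comp (by decide), hline, hline, hline, hline, hline, hline, hline, hdiff⟩⟩
    · let τ : Fin 8 ≃ Fin 7 ⊕ Unit := .ofBijective
        ![.inr (), .inl 6, .inl 5, .inl 3, .inl 0, .inl 4, .inl 1, .inl 2] (by decide)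
      let v : Fin 8 → Fin 7 ⊕ Fin 2 :=
        ![.inr 0, .inl 0, .inl 1, .inl 3, .inl 2, .inl 6, .inl 4, .inl 5]
      have hv : Function.Injective v := by decide
      have hlv : ∀ k, v k ≠ .inr 1 := by decide
      exact ⟨τ.trans σ, .inl ⟨l ∘ v, hl.comp hv,
        hdiff.trans (antiK_sub_diffL9_eq_cubicL9 (hl.comp hv) fun k => hl.ne (hlv k)),
        hline, hline, hline, hline, hline, hline, hline⟩⟩

/-- Lemma 5.1 at the homological level: let `F₁, …, F₈` be classes in `L₉` such that
(i) each `F_k` has the form `a_kH − (a_k−1)E_j − Σ_{i ∈ S} Eᵢ` with `0 ≤ a_k ≤ 3`,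
`j ∉ S`, `|S| = 2a_k + 1` (the form of a symplectic `(−2)`-sphere class forced by
Lemma 3.6 under the area condition); (ii) `F_j·F_k = 0` for `j ≠ k`; (iii) with
respect to reduced area data `(h, e)` there are `δ₁, δ₂` with `δ₂ < δ₁ < 2δ₂` and
`7δᵢ < 3h − Σᵢ eᵢ`, such that exactly one `F_k` has area `δ₁` and the remaining
seven have area `δ₂`. Then, up to reordering, the classes are as in one of the
three cases (a), (b), (c). -/
theorem stmt15 (h : ℝ) (e : Fin 9 → ℝ)
    (he : ∀ i, 0 < e i)
    (hmono : ∀ i j : Fin 9, i ≤ j → e j ≤ e i)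
    (h2pt : ∀ i j : Fin 9, i ≠ j → 0 < h - e i - e j)
    (h3pt : ∀ i j k : Fin 9, i ≠ j → i ≠ k → j ≠ k → 0 ≤ h - e i - e j - e k)
    (F : Fin 8 → ℤ × (Fin 9 → ℤ))
    (hform : ∀ k, ∃ (a : ℤ) (j : Fin 9) (S : Finset (Fin 9)),
      0 ≤ a ∧ a ≤ 3 ∧ j ∉ S ∧ (S.card : ℤ) = 2 * a + 1 ∧
      (F k).1 = a ∧
      (F k).2 = fun x => if x = j then -(a - 1) else if x ∈ S then -1 else 0)
    (hperp : ∀ j k : Fin 8, j ≠ k → interL9 (F j) (F k) = 0)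
    (δ₁ δ₂ : ℝ) (hδ21 : δ₂ < δ₁) (hδ12 : δ₁ < 2 * δ₂)
    (hδ1K : 7 * δ₁ < 3 * h - ∑ i, e i) (hδ2K : 7 * δ₂ < 3 * h - ∑ i, e i)
    (k₀ : Fin 8)
    (harea1 : areaL9 h e (F k₀) = δ₁)
    (harea2 : ∀ k, k ≠ k₀ → areaL9 h e (F k) = δ₂) :
    ∃ σ : Equiv.Perm (Fin 8),
      (∃ i : Fin 8 → Fin 9, Function.Injective i ∧
        F (σ 0) = cubicL9 i ∧
        F (σ 1) = lineL9 (i 1) (i 2) (i 3) ∧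
        F (σ 2) = lineL9 (i 1) (i 4) (i 5) ∧
        F (σ 3) = lineL9 (i 1) (i 6) (i 7) ∧
        F (σ 4) = lineL9 (i 2) (i 4) (i 6) ∧
        F (σ 5) = lineL9 (i 2) (i 5) (i 7) ∧
        F (σ 6) = lineL9 (i 3) (i 4) (i 7) ∧
        F (σ 7) = lineL9 (i 3) (i 5) (i 6)) ∨
      (∃ l : Fin 9 → Fin 9, Function.Injective l ∧
        F (σ 0) = lineL9 (l 0) (l 1) (l 2) ∧
        F (σ 1) = lineL9 (l 0) (l 3) (l 4) ∧
        F (σ 2) = lineL9 (l 0) (l 5) (l 6) ∧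
        F (σ 3) = lineL9 (l 1) (l 3) (l 5) ∧
        F (σ 4) = lineL9 (l 2) (l 4) (l 5) ∧
        F (σ 5) = lineL9 (l 1) (l 4) (l 6) ∧
        F (σ 6) = lineL9 (l 2) (l 3) (l 6) ∧
        F (σ 7) = diffL9 (l 7) (l 8)) ∨
      (∃ l : Fin 9 → Fin 9, Function.Injective l ∧
        F (σ 0) = lineL9 (l 0) (l 1) (l 2) ∧
        F (σ 1) = lineL9 (l 0) (l 3) (l 4) ∧
        F (σ 2) = lineL9 (l 0) (l 5) (l 6) ∧
        F (σ 3) = lineL9 (l 0) (l 7) (l 8) ∧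
        F (σ 4) = diffL9 (l 1) (l 2) ∧
        F (σ 5) = diffL9 (l 3) (l 4) ∧
        F (σ 6) = diffL9 (l 5) (l 6) ∧
        F (σ 7) = diffL9 (l 7) (l 8)) := by
  exact stmt15_general h e h3pt F (fun k => let ⟨a, j, S, _, _, hk⟩ := hform k; ⟨a, j, S, hk⟩)
    hperp δ₁ δ₂ hδ21 hδ12 (by linarith) k₀ harea1 harea2
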